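/- Let R be a ring (not necessarily commutative), m ≥ 1, and let A = (a_{ij}) be an m×m matrix over R such that a_{jk}a_{ik} = a_{ik}a_{jk} holds for all i,j and all k ≠ m, and a_{ik}a_{jl} − a_{jk}a_{il} = a_{jl}a_{ik} − a_{il}a_{jk} holds for all i,j and all k ≠ l with k,l ≠ m (i.e., the right-quantum relations are assumed only for columns other than the last). Suppose I − A is invertible over R with inverse B. Then det(I − A) · B_{mm} = det((I − A)^{mm}), where det is the column determinant and (I − A)^{mm} is I − A with its m-th row and m-th column deleted. -/

import Mathlib

/-!
Statement 11: if the right-quantum relations hold for all columns other than the last one,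
and `I − A` is invertible with inverse `B`, then
`det(I − A) · B_{mm} = det((I − A)^{mm})`, where `det` is the column determinant and
`(I − A)^{mm}` is `I − A` with its last row and last column deleted.
-/

variable {R : Type*} [Ring R] {m : ℕ}

/-- The column determinant of a matrix over a (not necessarily commutative) ring:
`∑_π sgn(π) b_{π(1)1} b_{π(2)2} ⋯ b_{π(m)m}`. -/
def cdet {n : ℕ} (B : Matrix (Fin n) (Fin n) R) : R :=
  ∑ π : Equiv.Perm (Fin n),
    (Equiv.Perm.sign π : ℤ) • ((List.finRange n).map fun k => B (π k) k).prod

/-- The column determinant of the square submatrix of `B` with rows indexed by `S` and columns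
indexed by `T` (each taken in increasing order); `0` if `S` and `T` have different sizes. -/
def cdetSub (B : Matrix (Fin m) (Fin m) R) (S T : Finset (Fin m)) : R :=
  if h : S.card = T.card then
    ∑ π : Equiv.Perm (Fin T.card),
      (Equiv.Perm.sign π : ℤ) •
        ((List.finRange T.card).map fun k =>
          B ((S.orderIsoOfFin h (π k) : Fin m)) ((T.orderIsoOfFin rfl k : Fin m))).prod
  else 0

/- Cramer's rule for the last unknown only needs two facts about `cdet`: it is right linear in the
last column, whatever the matrix, and it vanishes when the last column repeats an earlier one. The
second fact involves only the relations among the columns before the last: they make `cdet`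
alternating, since an adjacent transposition of columns changes the sign and equal adjacent columns
commute. Applied to `(I - A) b = e_m`, Cramer's rule replaces the last column of `I - A` by `e_m`,
and the determinant of the result is the principal minor. -/

section RightQuantum

variable {ι κ μ : Type*}

/-- Right-quantum matrices, over which the column determinant is alternating in the columns. The
second relation is `a_{ik}a_{jl} − a_{jk}a_{il} = a_{jl}a_{ik} − a_{il}a_{jk}` in terms of ring
commutators; for `k = l` it follows from the first. Rectangular matrices are allowed so
that a selection of columns can be right-quantum. -/
structure IsRightQuantum (C : Matrix ι κ R) : Prop where
  commute (i j : ι) (k : κ) : Commute (C i k) (C j k)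
  lie_eq_lie (i j : ι) (k l : κ) : ⁅C i k, C j l⁆ = ⁅C j k, C i l⁆

theorem IsRightQuantum.of_commute_of_sub_eq_sub {C : Matrix ι κ R}
    (hcomm : ∀ i j k, Commute (C i k) (C j k))
    (hcross : ∀ i j k l, k ≠ l →
      C i k * C j l - C j k * C i l = C j l * C i k - C i l * C j k) :
    IsRightQuantum C where
  commute := hcomm
  lie_eq_lie i j k l := by
    obtain rfl | hkl := eq_or_ne k l
    · rw [(hcomm i j k).lie_eq, (hcomm j i k).lie_eq]
    · exact sub_eq_sub_iff_sub_eq_sub.mp (hcross i j k l hkl)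

theorem IsRightQuantum.submatrix_id {C : Matrix ι κ R} (hC : IsRightQuantum C) (f : μ → κ) :
    IsRightQuantum (C.submatrix id f) where
  commute i j k := hC.commute i j (f k)
  lie_eq_lie i j k l := hC.lie_eq_lie i j (f k) (f l)

theorem lie_sub_sub_of_commute {z w : R} (hz : ∀ x, Commute z x) (hw : ∀ x, Commute w x)
    (a b : R) : ⁅z - a, w - b⁆ = ⁅a, b⁆ := by
  simp only [Ring.lie_def, sub_mul, mul_sub, (hz _).eq, (hw a).eq]
  abel

theorem IsRightQuantum.sub_of_commute {Z C : Matrix ι κ R} (hC : IsRightQuantum C)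
    (hZ : ∀ i k x, Commute (Z i k) x) : IsRightQuantum (Z - C) where
  commute i j k := by
    rw [commute_iff_lie_eq, Matrix.sub_apply, Matrix.sub_apply,
      lie_sub_sub_of_commute (hZ i k) (hZ j k), (hC.commute i j k).lie_eq]
  lie_eq_lie i j k l := by
    simp only [Matrix.sub_apply, lie_sub_sub_of_commute (hZ _ _) (hZ _ _), hC.lie_eq_lie i j k l]

theorem commute_one_apply [DecidableEq ι] (i j : ι) (x : R) :
    Commute ((1 : Matrix ι ι R) i j) x := by
  rw [Matrix.one_apply]
  split_ifs
  exacts [Commute.one_left x, Commute.zero_left x]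

end RightQuantum

section Alternating

variable {n : ℕ}

theorem finRange_succ_eq_append_adjacent (i : Fin n) :
    ∃ l₁ l₂ : List (Fin (n + 1)), List.finRange (n + 1) = l₁ ++ i.castSucc :: i.succ :: l₂ := by
  refine ⟨(List.finRange (n + 1)).take i, (List.finRange (n + 1)).drop (i + 2), ?_⟩
  conv_lhs => rw [← List.take_append_drop (i : ℕ) (List.finRange (n + 1))]
  rw [List.drop_eq_getElem_cons (by simp), List.drop_eq_getElem_cons (by simp)]
  simp [Fin.ext_iff]

theorem exists_prod_finRange_eq_mul_adjacent_mul {M : Type*} [Monoid M] (i : Fin n)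
    (f : Fin (n + 1) → M) :
    ∃ P Q : M, ∀ g : Fin (n + 1) → M, (∀ k, k ≠ i.castSucc → k ≠ i.succ → g k = f k) →
      ((List.finRange (n + 1)).map g).prod = P * (g i.castSucc * g i.succ) * Q := by
  obtain ⟨l₁, l₂, hl⟩ := finRange_succ_eq_append_adjacent i
  have hnodup := hl ▸ List.nodup_finRange (n + 1)
  refine ⟨(l₁.map f).prod, (l₂.map f).prod, fun g hg => ?_⟩
  have h₁ : l₁.map g = l₁.map f := List.map_congr_left fun k hk => hg k (by grind) (by grind)
  have h₂ : l₂.map g = l₂.map f := List.map_congr_left fun k hk => hg k (by grind) (by grind)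
  simp only [hl, List.map_append, List.map_cons, List.prod_append, List.prod_cons, h₁, h₂,
    mul_assoc]

theorem sum_perm_eq_zero_of_add_mul_swap {α M : Type*} [Fintype α] [DecidableEq α]
    [AddCommMonoid M] {i j : α} (hij : i ≠ j) (f : Equiv.Perm α → M)
    (hf : ∀ π, f π + f (π * Equiv.swap i j) = 0) : ∑ π, f π = 0 :=
  Finset.sum_involution (fun π _ => π * Equiv.swap i j) (fun π _ => hf π)
    (fun _ _ _ h => hij (Equiv.swap_eq_one_iff.mp (mul_eq_left.mp h)))
    (fun _ _ => Finset.mem_univ _) (fun π _ => Equiv.mul_swap_mul_self i j π)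

theorem IsRightQuantum.cdet_submatrix_swap_adjacent
    {C : Matrix (Fin (n + 1)) (Fin (n + 1)) R} (hC : IsRightQuantum C) (i : Fin n) :
    cdet (C.submatrix id (Equiv.swap i.castSucc i.succ)) = -cdet C := by
  have hne : i.castSucc ≠ i.succ := i.castSucc_lt_succ.ne
  refine eq_neg_of_add_eq_zero_right ?_
  rw [cdet, cdet, ← Finset.sum_add_distrib]
  refine sum_perm_eq_zero_of_add_mul_swap hne _ fun π => ?_
  obtain ⟨P, Q, hPQ⟩ := exists_prod_finRange_eq_mul_adjacent_mul i fun k => C (π k) k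
  have hrel := hC.lie_eq_lie (π i.castSucc) (π i.succ) i.castSucc i.succ
  rw [Ring.lie_def, Ring.lie_def, sub_eq_sub_iff_add_eq_add] at hrel
  rw [hPQ, hPQ, hPQ, hPQ]
  · simp only [Equiv.Perm.sign_mul, Equiv.Perm.sign_swap hne, mul_neg_one, Units.val_neg, neg_smul,
      Equiv.Perm.mul_apply, Equiv.swap_apply_left, Equiv.swap_apply_right, Matrix.submatrix_apply,
      id_eq, ← neg_add, ← smul_add, ← mul_add, ← add_mul, hrel, add_neg_cancel]
  all_goals intro k h₁ h₂; simp [Equiv.swap_apply_of_ne_of_ne h₁ h₂]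

theorem IsRightQuantum.cdet_submatrix_perm
    {C : Matrix (Fin n) (Fin n) R} (hC : IsRightQuantum C) (σ : Equiv.Perm (Fin n)) :
    cdet (C.submatrix id σ) = (Equiv.Perm.sign σ : ℤ) • cdet C := by
  cases n with
  | zero => simp [Subsingleton.elim σ 1]
  | succ n =>
    have hσ : σ ∈ Submonoid.closure (Set.range fun i : Fin n => Equiv.swap i.castSucc i.succ) :=
      Equiv.Perm.mclosure_swap_castSucc_succ n ▸ Submonoid.mem_top σ
    induction hσ using Submonoid.closure_induction_right with
    | one => simp
    | mul_right σ _ τ hτ ih =>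
      obtain ⟨i, rfl⟩ := hτ
      have hne : i.castSucc ≠ i.succ := i.castSucc_lt_succ.ne
      have hcomp := (hC.submatrix_id σ).cdet_submatrix_swap_adjacent i
      rw [Matrix.submatrix_submatrix, Function.id_comp, ih] at hcomp
      simpa [Equiv.Perm.sign_swap hne] using hcomp

theorem IsRightQuantum.cdet_eq_zero_of_adjacent_columns_eq
    {C : Matrix (Fin (n + 1)) (Fin (n + 1)) R} (hC : IsRightQuantum C) {i : Fin n}
    (h : ∀ a, C a i.castSucc = C a i.succ) : cdet C = 0 := by
  refine sum_perm_eq_zero_of_add_mul_swap i.castSucc_lt_succ.ne _ fun π => ?_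
  obtain ⟨P, Q, hPQ⟩ := exists_prod_finRange_eq_mul_adjacent_mul i fun k => C (π k) k
  have hcomm := (hC.commute (π i.castSucc) (π i.succ) i.succ).eq
  rw [hPQ, hPQ]
  · simp [h, hcomm, Equiv.Perm.sign_swap i.castSucc_lt_succ.ne]
  all_goals intro k h₁ h₂; simp [Equiv.swap_apply_of_ne_of_ne h₁ h₂]

theorem IsRightQuantum.cdet_eq_zero_of_columns_eq
    {C : Matrix (Fin n) (Fin n) R} (hC : IsRightQuantum C) {p q : Fin n} (hpq : p ≠ q)
    (h : ∀ a, C a p = C a q) : cdet C = 0 := by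
  wlog hlt : p < q generalizing p q
  · exact this hpq.symm (fun a => (h a).symm) (lt_of_le_of_ne (not_lt.mp hlt) hpq.symm)
  obtain ⟨n, rfl⟩ : ∃ k, n = k + 1 := ⟨n - 1, by omega⟩
  obtain ⟨i, rfl⟩ := Fin.exists_castSucc_eq.mpr (Fin.ne_last_of_lt hlt)
  set σ := Equiv.swap i.succ q
  have hσ : cdet (C.submatrix id σ) = 0 :=
    (hC.submatrix_id σ).cdet_eq_zero_of_adjacent_columns_eq (i := i) fun a => by
      simp [σ, Equiv.swap_apply_of_ne_of_ne i.castSucc_lt_succ.ne hpq, h]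
  rw [hC.cdet_submatrix_perm] at hσ
  rcases Int.units_eq_one_or (Equiv.Perm.sign σ) with hs | hs <;> simpa [hs] using hσ

end Alternating

section LastColumn

variable {n : ℕ}

theorem cdet_updateCol_last (C : Matrix (Fin (n + 1)) (Fin (n + 1)) R) (v : Fin (n + 1) → R) :
    cdet (C.updateCol (Fin.last n) v) =
      ∑ π : Equiv.Perm (Fin (n + 1)), (Equiv.Perm.sign π : ℤ) •
        (((List.finRange n).map fun k => C (π k.castSucc) k.castSucc).prod *
          v (π (Fin.last n))) := by
  simp [cdet, List.finRange_succ_last, Function.comp_def, Matrix.updateCol_apply]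

theorem cdet_updateCol_last_mulVec (C : Matrix (Fin (n + 1)) (Fin (n + 1)) R)
    (b : Fin (n + 1) → R) :
    cdet (C.updateCol (Fin.last n) (C.mulVec b)) =
      ∑ k, cdet (C.updateCol (Fin.last n) (C.col k)) * b k := by
  simp only [cdet_updateCol_last, Matrix.mulVec, dotProduct, Matrix.col_apply, Finset.mul_sum,
    Finset.sum_mul, Finset.smul_sum, smul_mul_assoc, mul_assoc]
  exact Finset.sum_comm

theorem cdet_updateCol_last_single (C : Matrix (Fin (n + 1)) (Fin (n + 1)) R) :
    cdet (C.updateCol (Fin.last n) (Pi.single (Fin.last n) 1)) =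
      cdet (C.submatrix Fin.castSucc Fin.castSucc) := by
  let e : Equiv.Perm (Fin (n + 1)) ≃ Option (Fin n) × Equiv.Perm (Fin n) :=
    finSuccEquivLast.permCongr.trans Equiv.Perm.decomposeOption
  rw [cdet_updateCol_last, ← e.symm.sum_comp, Fintype.sum_prod_type, Fintype.sum_option]
  simp [e, cdet, Equiv.permCongr_symm, Equiv.permCongr_apply, Equiv.Perm.sign_permCongr]

theorem cdetSub_eq_cdet_submatrix (C : Matrix (Fin m) (Fin m) R) {S T : Finset (Fin m)}
    (hS : S.card = n) (hT : T.card = n) :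
    cdetSub C S T = cdet (C.submatrix (S.orderEmbOfFin hS) (T.orderEmbOfFin hT)) := by
  subst hT
  exact dif_pos hS

theorem cdetSub_erase_last (C : Matrix (Fin (n + 1)) (Fin (n + 1)) R) :
    cdetSub C (Finset.univ.erase (Fin.last n)) (Finset.univ.erase (Fin.last n)) =
      cdet (C.submatrix Fin.castSucc Fin.castSucc) := by
  have hcard : (Finset.univ.erase (Fin.last n)).card = n := by simp
  rw [cdetSub_eq_cdet_submatrix C hcard hcard,
    ← Finset.orderEmbOfFin_unique hcard (by simp [Fin.castSucc_ne_last]) Fin.strictMono_castSucc]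

theorem cdet_mul_last_eq_cdet_updateCol {C : Matrix (Fin (n + 1)) (Fin (n + 1)) R}
    (hC : IsRightQuantum (C.submatrix id Fin.castSucc)) (b : Fin (n + 1) → R) :
    cdet C * b (Fin.last n) = cdet (C.updateCol (Fin.last n) (C.mulVec b)) := by
  have hrepeat (k : Fin n) : cdet (C.updateCol (Fin.last n) (C.col k.castSucc)) = 0 := by
    have hcols : C.updateCol (Fin.last n) (C.col k.castSucc) =
        (C.submatrix id Fin.castSucc).submatrix id (Fin.snoc (α := fun _ => Fin n) id k) := by
      ext i j
      induction j using Fin.lastCases <;> simp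
    rw [hcols]
    exact (hC.submatrix_id _).cdet_eq_zero_of_columns_eq k.castSucc_lt_last.ne (by simp)
  rw [cdet_updateCol_last_mulVec, Fin.sum_univ_castSucc]
  have hlast : C.updateCol (Fin.last n) (C.col (Fin.last n)) = C := Matrix.updateCol_eq_self _ _
  simp [hrepeat, hlast]

end LastColumn

theorem partial_rightQuantum_matrix_inverse_last_entry_general {n : ℕ}
    (A : Matrix (Fin (n + 1)) (Fin (n + 1)) R)
    (h₁ : ∀ i j k : Fin (n + 1), (k : ℕ) ≠ n → A j k * A i k = A i k * A j k)
    (h₂ : ∀ i j k l : Fin (n + 1), k ≠ l → (k : ℕ) ≠ n → (l : ℕ) ≠ n →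
      A i k * A j l - A j k * A i l = A j l * A i k - A i l * A j k)
    (b : Fin (n + 1) → R) (hb : (1 - A).mulVec b = Pi.single (Fin.last n) 1) :
    cdet (1 - A) * b (Fin.last n) =
      cdetSub (1 - A) (Finset.univ.erase (Fin.last n)) (Finset.univ.erase (Fin.last n)) := by
  have hA : IsRightQuantum (A.submatrix id Fin.castSucc) :=
    .of_commute_of_sub_eq_sub (fun i j k => h₁ j i k.castSucc k.isLt.ne) fun i j k l hkl =>
      h₂ i j k.castSucc l.castSucc ((Fin.castSucc_injective n).ne hkl) k.isLt.ne l.isLt.ne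
  have hC : IsRightQuantum ((1 - A).submatrix id Fin.castSucc) :=
    hA.sub_of_commute fun i k => commute_one_apply i k.castSucc
  rw [cdet_mul_last_eq_cdet_updateCol hC, hb, cdet_updateCol_last_single, cdetSub_erase_last]

theorem partial_rightQuantum_matrix_inverse_last_entry (hm : 1 ≤ m)
    (A : Matrix (Fin m) (Fin m) R)
    (h₁ : ∀ i j k : Fin m, (k : ℕ) ≠ m - 1 → A j k * A i k = A i k * A j k)
    (h₂ : ∀ i j k l : Fin m, k ≠ l → (k : ℕ) ≠ m - 1 → (l : ℕ) ≠ m - 1 →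
      A i k * A j l - A j k * A i l = A j l * A i k - A i l * A j k)
    (B : Matrix (Fin m) (Fin m) R) (hB₁ : (1 - A) * B = 1) (hB₂ : B * (1 - A) = 1) :
    cdet (1 - A) * B ⟨m - 1, by omega⟩ ⟨m - 1, by omega⟩ =
      cdetSub (1 - A) (Finset.univ.erase ⟨m - 1, by omega⟩)
        (Finset.univ.erase ⟨m - 1, by omega⟩) := by
  obtain ⟨n, rfl⟩ := Nat.exists_eq_add_of_le' hm
  exact partial_rightQuantum_matrix_inverse_last_entry_general A h₁ h₂ (B.col (Fin.last n)) <| by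
    rw [← Matrix.mulVec_single_one, Matrix.mulVec_mulVec, hB₁, Matrix.one_mulVec]
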